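/- Let Γ₁ = ℤ[i] and Γ₂ = ⟨u, v⟩_ℤ for ℝ-linearly independent u, v ∈ ℤ[i]. If Im(u·conj(v)) divides each of N(u), N(v), and Re(u·conj(v)), but divides none of Im(u²), Im(v²), and Im(uv), then the point group of the color group H of the coloring of Γ₁ determined by Γ₂ is the cyclic group of order 4 generated by multiplication by i (so the color group is of type p4). -/

import Mathlib

open Complex

/-- A symmetry `h` of the plane (identified with `ℂ`) is a *color symmetry* of the
coloring of `Γ₁` determined by its subgroup `Γ₂` (each coset of `Γ₂` is one color) if
there is a permutation `σ` of the colors with `c (h ℓ) = σ (c ℓ)` for all `ℓ ∈ Γ₁`. -/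
def IsColorSymmetry (Γ₁ Γ₂ : AddSubgroup ℂ) (h : ℂ → ℂ) : Prop :=
  ∃ σ : Equiv.Perm (ℂ ⧸ Γ₂), ∀ ℓ ∈ Γ₁,
    (QuotientAddGroup.mk (h ℓ) : ℂ ⧸ Γ₂) = σ (QuotientAddGroup.mk ℓ)

/-- The point group `P(H)` of the color group `H` of the coloring of `Γ₁` determined by
`Γ₂`: all isometries of the plane fixing the origin, mapping `Γ₁` onto itself, and
permuting the colors. -/
def pointColorGroup (Γ₁ Γ₂ : AddSubgroup ℂ) : Set (ℂ → ℂ) :=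
  {g | Isometry g ∧ Function.Surjective g ∧ g 0 = 0 ∧
    g '' (Γ₁ : Set ℂ) = Γ₁ ∧ IsColorSymmetry Γ₁ Γ₂ g}

/-!
By Mazur–Ulam the point group consists of linear isometries, and such an isometry preserving `Γ₁`
permutes the cosets of `Γ₂ ≤ Γ₁` exactly when it preserves `Γ₂`. For `Γ₁ = ℤ[i]` the candidates are
`z ↦ iᵏ z` and `z ↦ iᵏ conj z`, so the point group is the group of quarter turns if and only if `Γ₂`
is closed under multiplication by `i` but not under conjugation. With `d = Im(u conj v) ≠ 0`,
Cramer's rule `d w = Im(w conj v) u + Im(u conj w) v` turns membership of `w` in `⟨u, v⟩_ℤ` into two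
divisibilities by `d`; the two closure conditions are those for `w = iu, iv` and for
`w = conj u, conj v`.
-/

open scoped ComplexConjugate

/-- The square lattice `ℤ[i]` as an additive subgroup of the plane. -/
def squareLattice : AddSubgroup ℂ :=
  AddSubgroup.closure {1, I}

/-- The cyclic group of order `4` generated by multiplication by `i`, as a set of maps of the
plane. -/
def quarterTurns : Set (ℂ → ℂ) :=
  {g | ∃ k : Fin 4, g = fun z => I ^ (k : ℕ) * z}

section ColorSymmetry

variable {Γ₁ Γ₂ : AddSubgroup ℂ}

theorem IsColorSymmetry.apply_mem_iff {g : ℂ → ℂ} (hg : IsColorSymmetry Γ₁ Γ₂ g) (hg0 : g 0 = 0)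
    {z : ℂ} (hz : z ∈ Γ₁) : g z ∈ Γ₂ ↔ z ∈ Γ₂ := by
  obtain ⟨σ, hσ⟩ := hg
  have hσ0 : σ (QuotientAddGroup.mk 0) = QuotientAddGroup.mk 0 := by
    rw [← hσ 0 Γ₁.zero_mem, hg0]
  have mk_eq_mk_zero (w : ℂ) :
      (QuotientAddGroup.mk w : ℂ ⧸ Γ₂) = QuotientAddGroup.mk 0 ↔ w ∈ Γ₂ :=
    QuotientAddGroup.eq_zero_iff w
  rw [← mk_eq_mk_zero, ← mk_eq_mk_zero, hσ z hz]
  nth_rw 1 [← hσ0]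
  exact σ.apply_eq_iff_eq

theorem isColorSymmetry_of_apply_mem_iff (f : ℂ ≃+ ℂ) (hf : ∀ z, f z ∈ Γ₂ ↔ z ∈ Γ₂) :
    IsColorSymmetry Γ₁ Γ₂ f := by
  have hmap : Γ₂.map (f : ℂ →+ ℂ) = Γ₂ := by
    ext z
    refine AddSubgroup.mem_map_equiv.trans ?_
    rw [← hf, f.apply_symm_apply]
  exact ⟨(QuotientAddGroup.congr Γ₂ Γ₂ f hmap).toEquiv, fun _ _ => rfl⟩

theorem mem_pointColorGroup_iff (hΓ : Γ₂ ≤ Γ₁) {g : ℂ → ℂ} :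
    g ∈ pointColorGroup Γ₁ Γ₂ ↔
      ∃ f : ℂ ≃ₗᵢ[ℝ] ℂ, ⇑f = g ∧ (∀ z, f z ∈ Γ₁ ↔ z ∈ Γ₁) ∧ ∀ z, f z ∈ Γ₂ ↔ z ∈ Γ₂ := by
  constructor
  · rintro ⟨hiso, hsurj, hg0, himage, hcolor⟩
    let e : ℂ ≃ᵢ ℂ := ⟨Equiv.ofBijective g ⟨hiso.injective, hsurj⟩, hiso⟩
    have hg₁ (z : ℂ) : g z ∈ Γ₁ ↔ z ∈ Γ₁ := by
      simpa only [himage, SetLike.mem_coe] using hiso.injective.mem_set_image (s := (Γ₁ : Set ℂ))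
    refine ⟨e.toRealLinearIsometryEquivOfMapZero hg0, rfl, hg₁, fun z => ?_⟩
    by_cases hz : z ∈ Γ₁
    · exact hcolor.apply_mem_iff hg0 hz
    · exact iff_of_false (fun h => hz ((hg₁ z).1 (hΓ h))) (fun h => hz (hΓ h))
  · rintro ⟨f, rfl, hf₁, hf₂⟩
    refine ⟨f.isometry, f.surjective, map_zero f, ?_,
      isColorSymmetry_of_apply_mem_iff f.toLinearEquiv.toAddEquiv hf₂⟩
    have hpreimage : f ⁻¹' (Γ₁ : Set ℂ) = Γ₁ := Set.ext hf₁
    nth_rw 1 [← hpreimage]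
    exact f.surjective.image_preimage _

end ColorSymmetry

section QuarterTurns

theorem I_pow_mul_mem_iff {Γ : AddSubgroup ℂ} (hI : ∀ z ∈ Γ, I * z ∈ Γ) (k : ℕ) {z : ℂ} :
    I ^ k * z ∈ Γ ↔ z ∈ Γ := by
  have pow_mul_mem (n : ℕ) {w : ℂ} (hw : w ∈ Γ) : I ^ n * w ∈ Γ := by
    induction n with
    | zero => simpa only [pow_zero, one_mul] using hw
    | succ n ih => simpa only [pow_succ', mul_assoc] using hI _ ih
  have hinv : I ^ (3 * k) * (I ^ k * z) = z := by
    rw [← mul_assoc, ← pow_add, show 3 * k + k = 4 * k by ring, pow_mul, I_pow_four, one_pow,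
      one_mul]
  exact ⟨fun h => hinv ▸ pow_mul_mem (3 * k) h, pow_mul_mem k⟩

theorem mem_squareLattice {z : ℂ} : z ∈ squareLattice ↔ ∃ m n : ℤ, z = m + n * I := by
  simp only [squareLattice, AddSubgroup.mem_closure_pair, zsmul_eq_mul, mul_one, eq_comm]

theorem I_mul_mem_squareLattice : ∀ z ∈ squareLattice, I * z ∈ squareLattice := by
  simp only [mem_squareLattice]
  rintro _ ⟨m, n, rfl⟩
  refine ⟨-n, m, ?_⟩
  push_cast
  linear_combination (n : ℂ) * I_mul_I

theorem conj_mem_squareLattice_iff {z : ℂ} : conj z ∈ squareLattice ↔ z ∈ squareLattice := by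
  have conj_mem {w : ℂ} (hw : w ∈ squareLattice) : conj w ∈ squareLattice := by
    obtain ⟨m, n, rfl⟩ := mem_squareLattice.1 hw
    exact mem_squareLattice.2 ⟨m, -n, by simp⟩
  exact ⟨fun h => conj_conj z ▸ conj_mem h, conj_mem⟩

theorem exists_eq_I_pow_of_mem_squareLattice {z : ℂ} (hz : z ∈ squareLattice) (hnorm : ‖z‖ = 1) :
    ∃ k : Fin 4, z = I ^ (k : ℕ) := by
  obtain ⟨m, n, rfl⟩ := mem_squareLattice.1 hz
  have hsum : m * m + n * n = 1 := by
    have h := normSq_eq_norm_sq (m + n * I : ℂ)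
    rw [hnorm, ← ofReal_intCast, ← ofReal_intCast, normSq_add_mul_I] at h
    exact_mod_cast (by linarith : (m : ℝ) * m + n * n = 1)
  obtain ⟨hm₁, hm₂⟩ : -1 ≤ m ∧ m ≤ 1 := ⟨by nlinarith, by nlinarith⟩
  obtain ⟨hn₁, hn₂⟩ : -1 ≤ n ∧ n ≤ 1 := ⟨by nlinarith, by nlinarith⟩
  obtain ⟨rfl, rfl⟩ | ⟨rfl, rfl⟩ | ⟨rfl, rfl⟩ | ⟨rfl, rfl⟩ :
      m = 1 ∧ n = 0 ∨ m = 0 ∧ n = 1 ∨ m = -1 ∧ n = 0 ∨ m = 0 ∧ n = -1 := by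
    interval_cases m <;> interval_cases n <;> simp_all
  · exact ⟨0, by simp⟩
  · exact ⟨1, by simp⟩
  · exact ⟨2, by simp⟩
  · exact ⟨3, by simp⟩

theorem exists_eq_I_pow_mul_or_eq_I_pow_mul_conj (f : ℂ ≃ₗᵢ[ℝ] ℂ)
    (hf : f 1 ∈ squareLattice) :
    ∃ k : Fin 4, (∀ z, f z = I ^ (k : ℕ) * z) ∨ ∀ z, f z = I ^ (k : ℕ) * conj z := by
  obtain ⟨k, hk⟩ :=
    exists_eq_I_pow_of_mem_squareLattice hf ((f.norm_map 1).trans norm_one)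
  obtain ⟨a, rfl | rfl⟩ := linear_isometry_complex f
  · have ha : (a : ℂ) = I ^ (k : ℕ) := by simpa using hk
    exact ⟨k, Or.inl fun z => by rw [rotation_apply, ha]⟩
  · have ha : (a : ℂ) = I ^ (k : ℕ) := by simpa using hk
    exact ⟨k, Or.inr fun z => by simp [ha]⟩

variable {Γ : AddSubgroup ℂ}

theorem I_pow_mul_mem_pointColorGroup (hΓ : Γ ≤ squareLattice) (hI : ∀ z ∈ Γ, I * z ∈ Γ) (k : ℕ) :
    (fun z => I ^ k * z) ∈ pointColorGroup squareLattice Γ :=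
  (mem_pointColorGroup_iff hΓ).2
    ⟨rotation ⟨I ^ k, by simp [Submonoid.unitSphere]⟩, rfl,
      fun _ => I_pow_mul_mem_iff I_mul_mem_squareLattice k, fun _ => I_pow_mul_mem_iff hI k⟩

theorem conj_mem_pointColorGroup (hΓ : Γ ≤ squareLattice) (hconj : ∀ z ∈ Γ, conj z ∈ Γ) :
    (fun z => conj z) ∈ pointColorGroup squareLattice Γ :=
  (mem_pointColorGroup_iff hΓ).2
    ⟨conjLIE, rfl, fun _ => conj_mem_squareLattice_iff,
      fun z => ⟨fun h => conj_conj z ▸ hconj _ h, hconj z⟩⟩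

theorem conj_notMem_quarterTurns : (fun z => conj z) ∉ quarterTurns := by
  rintro ⟨k, hk⟩
  have hk1 : (1 : ℂ) = I ^ (k : ℕ) := by simpa using congrFun hk 1
  have hkI : -I = I := by simpa [← hk1] using congrFun hk I
  exact I_ne_zero (neg_eq_self.1 hkI)

theorem pointColorGroup_squareLattice_eq_quarterTurns_iff (hΓ : Γ ≤ squareLattice) :
    pointColorGroup squareLattice Γ = quarterTurns ↔
      (∀ z ∈ Γ, I * z ∈ Γ) ∧ ¬ ∀ z ∈ Γ, conj z ∈ Γ := by
  constructor
  · refine fun h => ⟨fun z hz => ?_, fun hconj => ?_⟩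
    · have hI : (fun z => I * z) ∈ pointColorGroup squareLattice Γ := h ▸ ⟨1, by simp⟩
      obtain ⟨f, hf, -, hfΓ⟩ := (mem_pointColorGroup_iff hΓ).1 hI
      simpa only [hf] using (hfΓ z).2 hz
    · exact conj_notMem_quarterTurns (h ▸ conj_mem_pointColorGroup hΓ hconj)
  · rintro ⟨hI, hconj⟩
    refine Set.Subset.antisymm (fun g hg => ?_) ?_
    · obtain ⟨f, rfl, hf₁, hf₂⟩ := (mem_pointColorGroup_iff hΓ).1 hg
      have h1 : (1 : ℂ) ∈ squareLattice := AddSubgroup.subset_closure (Set.mem_insert _ _)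
      obtain ⟨k, hk | hk⟩ := exists_eq_I_pow_mul_or_eq_I_pow_mul_conj f ((hf₁ 1).2 h1)
      · exact ⟨k, funext hk⟩
      · refine absurd (fun z hz => ?_) hconj
        rw [← I_pow_mul_mem_iff hI k, ← hk]
        exact (hf₂ z).2 hz
    · rintro _ ⟨k, rfl⟩
      exact I_pow_mul_mem_pointColorGroup hΓ hI k

end QuarterTurns

theorem forall_mem_closure_pair_map_mem_iff {A B : Type*} [AddGroup A] [AddGroup B] (φ : A →+ B)
    (Γ : AddSubgroup B) (u v : A) :
    (∀ z ∈ AddSubgroup.closure {u, v}, φ z ∈ Γ) ↔ φ u ∈ Γ ∧ φ v ∈ Γ := by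
  change AddSubgroup.closure {u, v} ≤ Γ.comap φ ↔ _
  simp only [AddSubgroup.closure_le, Set.insert_subset_iff, Set.singleton_subset_iff,
    AddSubgroup.coe_comap, Set.mem_preimage, SetLike.mem_coe]

theorem im_mul_conj_mul_eq (u v w : ℂ) :
    ((u * conj v).im : ℂ) * w = ((w * conj v).im : ℂ) * u + ((u * conj w).im : ℂ) * v := by
  apply Complex.ext <;> simp <;> ring

theorem im_mul_conj_ne_zero {u v : ℂ} (h : LinearIndependent ℝ ![u, v]) :
    (u * conj v).im ≠ 0 := by
  intro hd
  have hrel : ((I * v * conj v).im : ℂ) * u + ((u * conj (I * v)).im : ℂ) * v = 0 := by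
    rw [← im_mul_conj_mul_eq, hd, ofReal_zero, zero_mul]
  have hnorm : (I * v * conj v).im = 0 := (LinearIndependent.pair_iff.1 h _ _ hrel).1
  rw [mul_assoc, mul_conj, I_mul_im, ofReal_re, normSq_eq_zero] at hnorm
  exact h.ne_zero 1 hnorm

section Divisibility

variable {u v : ℂ} {d : ℤ}

theorem mem_closure_pair_iff_dvd {w : ℂ} {m n : ℤ} (hd0 : d ≠ 0) (hd : (u * conj v).im = d)
    (hm : (w * conj v).im = m) (hn : (u * conj w).im = n) :
    w ∈ AddSubgroup.closure {u, v} ↔ d ∣ m ∧ d ∣ n := by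
  simp only [AddSubgroup.mem_closure_pair, zsmul_eq_mul]
  constructor
  · rintro ⟨a, b, rfl⟩
    constructor
    · refine ⟨a, ?_⟩
      have : (m : ℝ) = d * a := by
        rw [← hm, ← hd]
        simp
        ring
      exact_mod_cast this
    · refine ⟨b, ?_⟩
      have : (n : ℝ) = d * b := by
        rw [← hn, ← hd]
        simp
        ring
      exact_mod_cast this
  · rintro ⟨⟨a, rfl⟩, ⟨b, rfl⟩⟩
    refine ⟨a, b, mul_left_cancel₀ (Int.cast_ne_zero.2 hd0) ?_⟩
    have hcramer := im_mul_conj_mul_eq u v w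
    rw [hd, hm, hn] at hcramer
    push_cast at hcramer
    linear_combination -hcramer

theorem forall_I_mul_mem_closure_pair_iff_dvd {r nu nv : ℤ} (hd0 : d ≠ 0)
    (hd : (u * conj v).im = d) (hr : (u * conj v).re = r) (hnu : normSq u = nu)
    (hnv : normSq v = nv) :
    (∀ z ∈ AddSubgroup.closure {u, v}, I * z ∈ AddSubgroup.closure {u, v}) ↔
      d ∣ nu ∧ d ∣ nv ∧ d ∣ r := by
  have hIu : I * u ∈ AddSubgroup.closure {u, v} ↔ d ∣ r ∧ d ∣ -nu := by
    refine mem_closure_pair_iff_dvd hd0 hd ?_ ?_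
    · rw [mul_assoc, I_mul_im, hr]
    · rw [Int.cast_neg, ← hnu, normSq_apply]
      simp [add_comm]
  have hIv : I * v ∈ AddSubgroup.closure {u, v} ↔ d ∣ nv ∧ d ∣ -r := by
    refine mem_closure_pair_iff_dvd hd0 hd ?_ ?_
    · rw [mul_assoc, I_mul_im, mul_conj, ofReal_re, hnv]
    · rw [Int.cast_neg, ← hr]
      simp [add_comm]
  calc
    _ ↔ I * u ∈ AddSubgroup.closure {u, v} ∧ I * v ∈ AddSubgroup.closure {u, v} :=
      forall_mem_closure_pair_map_mem_iff (AddMonoidHom.mulLeft I) _ u v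
    _ ↔ d ∣ nu ∧ d ∣ nv ∧ d ∣ r := by
      rw [hIu, hIv, dvd_neg, dvd_neg]
      tauto

theorem forall_conj_mem_closure_pair_iff_dvd {a b c : ℤ} (hd0 : d ≠ 0)
    (hd : (u * conj v).im = d) (ha : (u ^ 2).im = a) (hb : (v ^ 2).im = b)
    (hc : (u * v).im = c) :
    (∀ z ∈ AddSubgroup.closure {u, v}, conj z ∈ AddSubgroup.closure {u, v}) ↔
      d ∣ a ∧ d ∣ b ∧ d ∣ c := by
  have hu : conj u ∈ AddSubgroup.closure {u, v} ↔ d ∣ -c ∧ d ∣ a := by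
    refine mem_closure_pair_iff_dvd hd0 hd ?_ ?_
    · rw [← map_mul, conj_im, hc, Int.cast_neg]
    · rw [conj_conj, ← sq, ha]
  have hv : conj v ∈ AddSubgroup.closure {u, v} ↔ d ∣ -b ∧ d ∣ c := by
    refine mem_closure_pair_iff_dvd hd0 hd ?_ ?_
    · rw [← map_mul, conj_im, ← sq, hb, Int.cast_neg]
    · rw [conj_conj, hc]
  calc
    _ ↔ conj u ∈ AddSubgroup.closure {u, v} ∧ conj v ∈ AddSubgroup.closure {u, v} :=
      forall_mem_closure_pair_map_mem_iff (starRingEnd ℂ).toAddMonoidHom _ u v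
    _ ↔ d ∣ a ∧ d ∣ b ∧ d ∣ c := by
      rw [hu, hv, dvd_neg, dvd_neg]
      tauto

end Divisibility

theorem pointColorGroup_p4_general {u v : ℂ} (hu : u ∈ squareLattice) (hv : v ∈ squareLattice)
    (hind : LinearIndependent ℝ ![u, v]) {ruv iuv nu nv iu2 iv2 imuv : ℤ}
    (hruv : (u * conj v).re = ruv) (hiuv : (u * conj v).im = iuv)
    (hnu : normSq u = nu) (hnv : normSq v = nv)
    (hu2 : (u ^ 2).im = iu2) (hv2 : (v ^ 2).im = iv2) (hmuv : (u * v).im = imuv) :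
    pointColorGroup squareLattice (AddSubgroup.closure {u, v}) = quarterTurns ↔
      (iuv ∣ nu ∧ iuv ∣ nv ∧ iuv ∣ ruv) ∧ ¬ (iuv ∣ iu2 ∧ iuv ∣ iv2 ∧ iuv ∣ imuv) := by
  have hle : AddSubgroup.closure {u, v} ≤ squareLattice :=
    (AddSubgroup.closure_le _).2 (Set.insert_subset hu (Set.singleton_subset_iff.2 hv))
  have hd0 : iuv ≠ 0 := Int.cast_ne_zero.1 (hiuv ▸ im_mul_conj_ne_zero hind)
  rw [pointColorGroup_squareLattice_eq_quarterTurns_iff hle,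
    forall_I_mul_mem_closure_pair_iff_dvd hd0 hiuv hruv hnu hnv,
    forall_conj_mem_closure_pair_iff_dvd hd0 hiuv hu2 hv2 hmuv]

/-- Case (b) for the square lattice `Γ₁ = ℤ[i]`: if `Im(u·conj v)` divides all of
`N(u)`, `N(v)`, `Re(u·conj v)` but none of `Im(u²)`, `Im(v²)`, `Im(uv)`, then the point
group of the color group of the coloring of `Γ₁` determined by `Γ₂ = ⟨u, v⟩_ℤ` is the
cyclic group of order `4` generated by multiplication by `i` (type `p4`). -/
theorem pointColorGroup_p4 (u v : ℂ) (u₁ u₂ v₁ v₂ : ℤ)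
    (hu : u = u₁ + u₂ * I) (hv : v = v₁ + v₂ * I)
    (hind : LinearIndependent ℝ ![u, v])
    (Γ₁ Γ₂ : AddSubgroup ℂ)
    (hΓ₁ : Γ₁ = AddSubgroup.closure ({1, I} : Set ℂ))
    (hΓ₂ : Γ₂ = AddSubgroup.closure ({u, v} : Set ℂ))
    (ruv iuv nu nv ru2 iu2 rv2 iv2 rmuv imuv : ℤ)
    (hruv : u * starRingEnd ℂ v = ruv + iuv * I)
    (hnu : u * starRingEnd ℂ u = (nu : ℂ))
    (hnv : v * starRingEnd ℂ v = (nv : ℂ))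
    (hu2 : u ^ 2 = ru2 + iu2 * I)
    (hv2 : v ^ 2 = rv2 + iv2 * I)
    (hmuv : u * v = rmuv + imuv * I)
    (hdvd : iuv ∣ nu ∧ iuv ∣ nv ∧ iuv ∣ ruv)
    (hndvd : ¬ iuv ∣ iu2 ∧ ¬ iuv ∣ iv2 ∧ ¬ iuv ∣ imuv) :
    pointColorGroup Γ₁ Γ₂ = {g | ∃ k : Fin 4, g = fun z => I ^ (k : ℕ) * z} := by
  subst hΓ₁ hΓ₂
  have hnu' : normSq u = nu := by exact_mod_cast (mul_conj u).symm.trans hnu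
  have hnv' : normSq v = nv := by exact_mod_cast (mul_conj v).symm.trans hnv
  exact (pointColorGroup_p4_general (iv2 := iv2) (imuv := imuv)
    (mem_squareLattice.2 ⟨u₁, u₂, hu⟩) (mem_squareLattice.2 ⟨v₁, v₂, hv⟩) hind
    (by simp [hruv]) (by simp [hruv]) hnu' hnv' (by simp [hu2]) (by simp [hv2])
    (by simp [hmuv])).2 ⟨hdvd, fun h => hndvd.1 h.1⟩
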